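/- arXiv:1406.1821 — 4 statements merged into one kernel-verified Lean document; each statement's English description precedes it below -/
import Mathlib

section
/- Let f, g : ℂ → ℂ and z ∈ ℂ. Suppose f is complex analytic at z with deriv f z ≠ 0, and g is complex analytic at f(z) with deriv g (f z) ≠ 0. Then the Schwarzian derivative satisfies the cocycle rule S(g ∘ f)(z) = Sg(f(z)) · (deriv f z)^2 + Sf(z). -/
/-!
Write `Pf = f''/f'` for the logarithmic derivative of `f'`, so that `Sf = (Pf)' − (Pf)²/2`. Taking
logarithmic derivatives in the chain rule gives `P(g ∘ f) = (Pg ∘ f) · f' + Pf`. Differentiating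
once more produces the term `(Pg ∘ f) · f''`, and this is exactly the cross term of the square in
`P(g ∘ f)²/2`, because `f'' = Pf · f'`.
-/

/-- The Schwarzian derivative of `f` at `z`:
`Sf(z) = f'''(z)/f'(z) − (3/2)·(f''(z)/f'(z))²`. -/
noncomputable def schwarzian (f : ℂ → ℂ) (z : ℂ) : ℂ :=
  deriv (deriv (deriv f)) z / deriv f z - (3 / 2) * (deriv (deriv f) z / deriv f z) ^ 2

section PreSchwarzian

open scoped Topology

variable {𝕜 𝕜' : Type*} [NontriviallyNormedField 𝕜] [NontriviallyNormedField 𝕜']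
  [NormedAlgebra 𝕜 𝕜'] {f : 𝕜 → 𝕜'} {g : 𝕜' → 𝕜'} {z : 𝕜}

/-- The pre-Schwarzian derivative `f''/f'`, whose Riccati expression `P' - P²/2` is the
Schwarzian. It takes the junk value `0` at critical points of `f`. -/
noncomputable def preSchwarzian (f : 𝕜 → 𝕜') : 𝕜 → 𝕜' :=
  logDeriv (deriv f)

theorem preSchwarzian_apply (f : 𝕜 → 𝕜') (z : 𝕜) :
    preSchwarzian f z = deriv (deriv f) z / deriv f z :=
  rfl

theorem preSchwarzian_mul_deriv (hf' : deriv f z ≠ 0) :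
    preSchwarzian f z * deriv f z = deriv (deriv f) z :=
  div_mul_cancel₀ _ hf'

theorem differentiableAt_preSchwarzian (hf : ContDiffAt 𝕜 3 f z) (hf' : deriv f z ≠ 0) :
    DifferentiableAt 𝕜 (preSchwarzian f) z := by
  have hdf : ContDiffAt 𝕜 2 (deriv f) z := hf.derivWithin (by norm_num)
  have hddf : ContDiffAt 𝕜 1 (deriv (deriv f)) z := hdf.derivWithin (by norm_num)
  exact (hddf.differentiableAt one_ne_zero).div (hdf.differentiableAt two_ne_zero) hf'

theorem deriv_comp_eventuallyEq (hg : ∀ᶠ w in 𝓝 (f z), DifferentiableAt 𝕜' g w)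
    (hf : ∀ᶠ w in 𝓝 z, DifferentiableAt 𝕜 f w) :
    deriv (g ∘ f) =ᶠ[𝓝 z] fun w ↦ deriv g (f w) * deriv f w := by
  filter_upwards [hf.self_of_nhds.continuousAt.eventually hg, hf] with w hgw hfw
  exact deriv_comp w hgw hfw

theorem preSchwarzian_comp (hg : ContDiffAt 𝕜' 2 g (f z)) (hf : ContDiffAt 𝕜 2 f z)
    (hg' : deriv g (f z) ≠ 0) (hf' : deriv f z ≠ 0) :
    preSchwarzian (g ∘ f) z = preSchwarzian g (f z) * deriv f z + preSchwarzian f z := by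
  have hfz : DifferentiableAt 𝕜 f z := hf.differentiableAt two_ne_zero
  have hdf : DifferentiableAt 𝕜 (deriv f) z :=
    (hf.derivWithin (m := 1) (by norm_num)).differentiableAt one_ne_zero
  have hdg : DifferentiableAt 𝕜' (deriv g) (f z) :=
    (hg.derivWithin (m := 1) (by norm_num)).differentiableAt one_ne_zero
  have chain_rule : deriv (g ∘ f) =ᶠ[𝓝 z] fun w ↦ (deriv g ∘ f) w * deriv f w :=
    deriv_comp_eventuallyEq
      ((hg.eventually (by norm_num)).mono fun _ h ↦ h.differentiableAt two_ne_zero)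
      ((hf.eventually (by norm_num)).mono fun _ h ↦ h.differentiableAt two_ne_zero)
  calc
    preSchwarzian (g ∘ f) z = logDeriv (fun w ↦ (deriv g ∘ f) w * deriv f w) z :=
      (logDeriv_congr_nhds chain_rule).self_of_nhds
    _ = logDeriv (deriv g ∘ f) z + logDeriv (deriv f) z :=
      logDeriv_mul z hg' hf' ((hdg.restrictScalars 𝕜).comp z hfz) hdf
    _ = preSchwarzian g (f z) * deriv f z + preSchwarzian f z := by
      rw [logDeriv_comp hdg hfz, preSchwarzian, preSchwarzian]

theorem preSchwarzian_comp_eventuallyEq (hg : ContDiffAt 𝕜' 2 g (f z)) (hf : ContDiffAt 𝕜 2 f z)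
    (hg' : deriv g (f z) ≠ 0) (hf' : deriv f z ≠ 0) :
    preSchwarzian (g ∘ f) =ᶠ[𝓝 z]
      fun w ↦ preSchwarzian g (f w) * deriv f w + preSchwarzian f w := by
  have hdf : ContDiffAt 𝕜 1 (deriv f) z := hf.derivWithin (by norm_num)
  have hdg : ContDiffAt 𝕜' 1 (deriv g) (f z) := hg.derivWithin (by norm_num)
  filter_upwards [hf.continuousAt.eventually (hg.eventually (by norm_num)),
    hf.eventually (by norm_num), hf.continuousAt.eventually (hdg.continuousAt.eventually_ne hg'),
    hdf.continuousAt.eventually_ne hf'] with w hgw hfw hgw' hfw'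
  exact preSchwarzian_comp hgw hfw hgw' hfw'

theorem deriv_preSchwarzian_comp (hg : ContDiffAt 𝕜' 3 g (f z)) (hf : ContDiffAt 𝕜 3 f z)
    (hg' : deriv g (f z) ≠ 0) (hf' : deriv f z ≠ 0) :
    deriv (preSchwarzian (g ∘ f)) z =
      deriv (preSchwarzian g) (f z) * deriv f z ^ 2 +
        preSchwarzian g (f z) * deriv (deriv f) z + deriv (preSchwarzian f) z := by
  have hfz : HasDerivAt f (deriv f z) z := (hf.differentiableAt three_ne_zero).hasDerivAt
  have hdf : HasDerivAt (deriv f) (deriv (deriv f) z) z :=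
    ((hf.derivWithin (m := 2) (by norm_num)).differentiableAt two_ne_zero).hasDerivAt
  have hPf := (differentiableAt_preSchwarzian hf hf').hasDerivAt
  have hPg := (differentiableAt_preSchwarzian hg hg').hasDerivAt
  have cocycle := preSchwarzian_comp_eventuallyEq (hg.of_le (by norm_num))
    (hf.of_le (by norm_num)) hg' hf'
  calc
    deriv (preSchwarzian (g ∘ f)) z =
        deriv (preSchwarzian g) (f z) * deriv f z * deriv f z +
          preSchwarzian g (f z) * deriv (deriv f) z + deriv (preSchwarzian f) z :=
      (((hPg.comp z hfz).mul hdf).add hPf |>.congr_of_eventuallyEq cocycle).deriv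
    _ = _ := by ring

end PreSchwarzian

theorem schwarzian_eq_deriv_preSchwarzian_sub {f : ℂ → ℂ} {z : ℂ} (hf : ContDiffAt ℂ 3 f z)
    (hf' : deriv f z ≠ 0) :
    schwarzian f z = deriv (preSchwarzian f) z - preSchwarzian f z ^ 2 / 2 := by
  have hdf : ContDiffAt ℂ 2 (deriv f) z := hf.derivWithin (by norm_num)
  have hddf : ContDiffAt ℂ 1 (deriv (deriv f)) z := hdf.derivWithin (by norm_num)
  have quotient_rule : deriv (preSchwarzian f) z =
      (deriv (deriv (deriv f)) z * deriv f z - deriv (deriv f) z * deriv (deriv f) z) /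
        deriv f z ^ 2 :=
    deriv_div (hddf.differentiableAt one_ne_zero) (hdf.differentiableAt two_ne_zero) hf'
  rw [quotient_rule, preSchwarzian_apply, schwarzian]
  field

/-- Cocycle rule for the Schwarzian derivative:
`S(g ∘ f)(z) = Sg(f(z)) · (f'(z))² + Sf(z)`. -/
theorem schwarzian_comp (f g : ℂ → ℂ) (z : ℂ)
    (hf : AnalyticAt ℂ f z) (hf' : deriv f z ≠ 0)
    (hg : AnalyticAt ℂ g (f z)) (hg' : deriv g (f z) ≠ 0) :
    schwarzian (g ∘ f) z = schwarzian g (f z) * (deriv f z) ^ 2 + schwarzian f z := by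
  have hgf' : deriv (g ∘ f) z ≠ 0 := by
    rw [deriv_comp z hg.differentiableAt hf.differentiableAt]
    exact mul_ne_zero hg' hf'
  rw [schwarzian_eq_deriv_preSchwarzian_sub (hg.comp hf).contDiffAt hgf',
    schwarzian_eq_deriv_preSchwarzian_sub hg.contDiffAt hg',
    schwarzian_eq_deriv_preSchwarzian_sub hf.contDiffAt hf',
    deriv_preSchwarzian_comp hg.contDiffAt hf.contDiffAt hg' hf',
    preSchwarzian_comp hg.contDiffAt hf.contDiffAt hg' hf', ← preSchwarzian_mul_deriv hf']
  ring
end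

section
/- Let U ⊆ ℂ be a nonempty open connected set and let f : ℂ → ℂ be complex analytic on a neighborhood of each point of U, with deriv f z ≠ 0 for all z ∈ U and with vanishing Schwarzian derivative: Sf(z) = 0 for all z ∈ U. Then f is the restriction to U of a Möbius transformation: there exist a, b, c, d ∈ ℂ with a·d − b·c ≠ 0 such that for every z ∈ U, c·z + d ≠ 0 and f(z) = (a·z + b)/(c·z + d). -/
section PointwiseDerivatives

variable {𝕜 : Type*} [NontriviallyNormedField 𝕜] {z : 𝕜}

lemma hasDerivAt_sub_div_one_add_mul_sub {m w : 𝕜} (hz : 1 + m * (z - w) ≠ 0) :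
    HasDerivAt (fun z => (z - w) / (1 + m * (z - w))) (1 / (1 + m * (z - w)) ^ 2) z := by
  have hsub : HasDerivAt (fun z => z - w) 1 z := (hasDerivAt_id' z).sub_const w
  refine (hsub.fun_div ((hsub.const_mul m).const_add 1) hz).congr_deriv ?_
  ring

lemma hasDerivAt_quadratic [NeZero (2 : 𝕜)] (a b c w : 𝕜) :
    HasDerivAt (fun z => a + b * (z - w) + c / 2 * (z - w) ^ 2) (b + c * (z - w)) z := by
  have hsub : HasDerivAt (fun z => z - w) 1 z := (hasDerivAt_id' z).sub_const w
  refine (((hsub.const_mul b).const_add a).fun_add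
    ((hsub.fun_pow 2).const_mul (c / 2))).congr_deriv ?_
  field_simp
  push_cast
  ring

lemma hasDerivAt_neg_div_sq_of_schwarzian_eq_zero [NeZero (2 : 𝕜)] {f' f'' : 𝕜 → 𝕜} {f''' : 𝕜}
    (hf' : HasDerivAt f' (f'' z) z) (hf'' : HasDerivAt f'' f''' z) (hne : f' z ≠ 0)
    (hS : f''' / f' z - 3 / 2 * (f'' z / f' z) ^ 2 = 0) :
    HasDerivAt (fun z => -f'' z / f' z ^ 2) ((-f'' z / f' z ^ 2) ^ 2 / (2 * (f' z)⁻¹)) z := by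
  have hf''' : f''' = 3 / 2 * f'' z ^ 2 / f' z := by
    field_simp at hS ⊢
    linear_combination hS
  refine (hf''.fun_neg.fun_div (hf'.fun_pow 2) (pow_ne_zero 2 hne)).congr_deriv ?_
  rw [hf''']
  field_simp
  push_cast
  ring

lemma hasDerivAt_sq_div_two_mul_eq_zero [NeZero (2 : 𝕜)] {h h' : 𝕜 → 𝕜}
    (hh : HasDerivAt h (h' z) z) (hh' : HasDerivAt h' (h' z ^ 2 / (2 * h z)) z) (h0 : h z ≠ 0) :
    HasDerivAt (fun z => h' z ^ 2 / (2 * h z)) 0 z := by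
  refine ((hh'.fun_pow 2).fun_div (hh.const_mul 2)
    (mul_ne_zero two_ne_zero h0)).congr_deriv ?_
  field_simp
  push_cast
  ring

end PointwiseDerivatives

section Integration

variable {𝕜 : Type*} [RCLike 𝕜] {U : Set 𝕜} {z₀ : 𝕜}

lemma eqOn_of_hasDerivAt_eq {E : Type*} [NormedAddCommGroup E] [NormedSpace 𝕜 E]
    {f g f' : 𝕜 → E} (hU : IsOpen U) (hUc : IsPreconnected U)
    (hf : ∀ z ∈ U, HasDerivAt f (f' z) z) (hg : ∀ z ∈ U, HasDerivAt g (f' z) z)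
    (hz₀ : z₀ ∈ U) (h : f z₀ = g z₀) : Set.EqOn f g U :=
  hU.eqOn_of_deriv_eq hUc
    (fun z hz => (hf z hz).differentiableAt.differentiableWithinAt)
    (fun z hz => (hg z hz).differentiableAt.differentiableWithinAt)
    (fun z hz => (hf z hz).deriv.trans (hg z hz).deriv.symm) hz₀ h

lemma eqOn_quadratic_of_hasDerivAt_const {h h' : 𝕜 → 𝕜} {c : 𝕜}
    (hU : IsOpen U) (hUc : IsPreconnected U) (hz₀ : z₀ ∈ U)
    (hh : ∀ z ∈ U, HasDerivAt h (h' z) z) (hh' : ∀ z ∈ U, HasDerivAt h' c z) :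
    Set.EqOn h (fun z => h z₀ + h' z₀ * (z - z₀) + c / 2 * (z - z₀) ^ 2) U := by
  have h'_affine : Set.EqOn h' (fun z => h' z₀ + c * (z - z₀)) U :=
    eqOn_of_hasDerivAt_eq hU hUc hh'
      (fun z _ => by
        simpa using (((hasDerivAt_id' z).sub_const z₀).const_mul c).const_add (h' z₀))
      hz₀ (by simp)
  exact eqOn_of_hasDerivAt_eq hU hUc hh
    (fun z hz => (hasDerivAt_quadratic _ _ c z₀).congr_deriv (h'_affine hz).symm)
    hz₀ (by simp)

lemma eqOn_const_mul_sq_of_hasDerivAt_sq_div {h h' : 𝕜 → 𝕜}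
    (hU : IsOpen U) (hUc : IsPreconnected U) (hz₀ : z₀ ∈ U)
    (hh : ∀ z ∈ U, HasDerivAt h (h' z) z)
    (hh' : ∀ z ∈ U, HasDerivAt h' (h' z ^ 2 / (2 * h z)) z) (h0 : ∀ z ∈ U, h z ≠ 0) :
    Set.EqOn h (fun z => h z₀ * (1 + h' z₀ / (2 * h z₀) * (z - z₀)) ^ 2) U := by
  have h''_const : Set.EqOn (fun z => h' z ^ 2 / (2 * h z))
      (fun _ => h' z₀ ^ 2 / (2 * h z₀)) U :=
    eqOn_of_hasDerivAt_eq hU hUc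
      (fun z hz => hasDerivAt_sq_div_two_mul_eq_zero (hh z hz) (hh' z hz) (h0 z hz))
      (fun z _ => hasDerivAt_const z _) hz₀ rfl
  intro z hz
  have hz₀0 := h0 z₀ hz₀
  calc h z = h z₀ + h' z₀ * (z - z₀) + h' z₀ ^ 2 / (2 * h z₀) / 2 * (z - z₀) ^ 2 :=
        eqOn_quadratic_of_hasDerivAt_const hU hUc hz₀ hh
          (fun w hw => (hh' w hw).congr_deriv (h''_const hw)) hz
    _ = h z₀ * (1 + h' z₀ / (2 * h z₀) * (z - z₀)) ^ 2 := by
        field_simp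
        ring

lemma eqOn_add_mul_div_of_hasDerivAt_div_sq {f : 𝕜 → 𝕜} {p m : 𝕜}
    (hU : IsOpen U) (hUc : IsPreconnected U) (hz₀ : z₀ ∈ U)
    (hm : ∀ z ∈ U, 1 + m * (z - z₀) ≠ 0)
    (hf : ∀ z ∈ U, HasDerivAt f (p * (1 / (1 + m * (z - z₀)) ^ 2)) z) :
    Set.EqOn f (fun z => f z₀ + p * ((z - z₀) / (1 + m * (z - z₀)))) U :=
  eqOn_of_hasDerivAt_eq hU hUc hf
    (fun z hz => ((hasDerivAt_sub_div_one_add_mul_sub (hm z hz)).const_mul p).const_add (f z₀))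
    hz₀ (by simp)

end Integration

section Schwarzian

variable {𝕜 : Type*} [RCLike 𝕜] {U : Set 𝕜} {f f' f'' f''' : 𝕜 → 𝕜}

lemma inv_deriv_eq_of_schwarzian_eq_zero {z₀ z : 𝕜}
    (hU : IsOpen U) (hUc : IsPreconnected U) (hz₀ : z₀ ∈ U)
    (hf' : ∀ z ∈ U, HasDerivAt f' (f'' z) z) (hf'' : ∀ z ∈ U, HasDerivAt f'' (f''' z) z)
    (hne : ∀ z ∈ U, f' z ≠ 0)
    (hS : ∀ z ∈ U, f''' z / f' z - 3 / 2 * (f'' z / f' z) ^ 2 = 0) (hz : z ∈ U) :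
    (f' z)⁻¹ = (f' z₀)⁻¹ * (1 + -f'' z₀ / (2 * f' z₀) * (z - z₀)) ^ 2 := by
  have hz₀ne := hne z₀ hz₀
  have hm : -f'' z₀ / f' z₀ ^ 2 / (2 * (f' z₀)⁻¹) = -f'' z₀ / (2 * f' z₀) := by field_simp
  rw [← hm]
  exact eqOn_const_mul_sq_of_hasDerivAt_sq_div (h := fun z => (f' z)⁻¹)
    (h' := fun z => -f'' z / f' z ^ 2) hU hUc hz₀
    (fun w hw => (hf' w hw).fun_inv (hne w hw))
    (fun w hw => hasDerivAt_neg_div_sq_of_schwarzian_eq_zero (hf' w hw) (hf'' w hw) (hne w hw)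
      (hS w hw))
    (fun w hw => inv_ne_zero (hne w hw)) hz

theorem eq_add_mul_div_of_schwarzian_eq_zero {z₀ : 𝕜}
    (hU : IsOpen U) (hUc : IsPreconnected U) (hz₀ : z₀ ∈ U)
    (hf : ∀ z ∈ U, HasDerivAt f (f' z) z) (hf' : ∀ z ∈ U, HasDerivAt f' (f'' z) z)
    (hf'' : ∀ z ∈ U, HasDerivAt f'' (f''' z) z) (hne : ∀ z ∈ U, f' z ≠ 0)
    (hS : ∀ z ∈ U, f''' z / f' z - 3 / 2 * (f'' z / f' z) ^ 2 = 0) :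
    ∀ z ∈ U, 1 + -f'' z₀ / (2 * f' z₀) * (z - z₀) ≠ 0 ∧
      f z = f z₀ + f' z₀ * ((z - z₀) / (1 + -f'' z₀ / (2 * f' z₀) * (z - z₀))) := by
  set m := -f'' z₀ / (2 * f' z₀)
  have hinv : ∀ z ∈ U, (f' z)⁻¹ = (f' z₀)⁻¹ * (1 + m * (z - z₀)) ^ 2 := fun z hz =>
    inv_deriv_eq_of_schwarzian_eq_zero hU hUc hz₀ hf' hf'' hne hS hz
  have hden : ∀ z ∈ U, 1 + m * (z - z₀) ≠ 0 := fun z hz h0 =>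
    inv_ne_zero (hne z hz) (by simp [hinv z hz, h0])
  have hderiv : ∀ z ∈ U, f' z = f' z₀ * (1 / (1 + m * (z - z₀)) ^ 2) := fun z hz => by
    rw [← inv_inv (f' z), hinv z hz, mul_inv, inv_inv, one_div]
  exact fun z hz => ⟨hden z hz, eqOn_add_mul_div_of_hasDerivAt_div_sq hU hUc hz₀ hden
    (fun w hw => (hf w hw).congr_deriv (hderiv w hw)) hz⟩

theorem mobius_of_schwarzian_eq_zero_general (hU : IsOpen U) (hUc : IsConnected U)
    (hf : ∀ z ∈ U, HasDerivAt f (f' z) z) (hf' : ∀ z ∈ U, HasDerivAt f' (f'' z) z)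
    (hf'' : ∀ z ∈ U, HasDerivAt f'' (f''' z) z) (hne : ∀ z ∈ U, f' z ≠ 0)
    (hS : ∀ z ∈ U, f''' z / f' z - 3 / 2 * (f'' z / f' z) ^ 2 = 0) :
    ∃ a b c d : 𝕜, a * d - b * c ≠ 0 ∧
      ∀ z ∈ U, c * z + d ≠ 0 ∧ f z = (a * z + b) / (c * z + d) := by
  obtain ⟨z₀, hz₀⟩ := hUc.nonempty
  obtain ⟨m, hm⟩ : ∃ m, ∀ z ∈ U, 1 + m * (z - z₀) ≠ 0 ∧
      f z = f z₀ + f' z₀ * ((z - z₀) / (1 + m * (z - z₀))) :=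
    ⟨_, eq_add_mul_div_of_schwarzian_eq_zero hU hUc.isPreconnected hz₀ hf hf' hf'' hne hS⟩
  refine ⟨f z₀ * m + f' z₀, f z₀ * (1 - m * z₀) - f' z₀ * z₀, m, 1 - m * z₀, ?_, fun z hz => ?_⟩
  · convert hne z₀ hz₀ using 1
    ring
  · obtain ⟨hden, hfz⟩ := hm z hz
    have hcd : m * z + (1 - m * z₀) = 1 + m * (z - z₀) := by ring
    rw [hcd]
    refine ⟨hden, ?_⟩
    rw [hfz, eq_div_iff hden, add_mul, mul_assoc, div_mul_cancel₀ _ hden]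
    ring

end Schwarzian

/-- A locally injective holomorphic function on a connected open set whose Schwarzian
derivative vanishes identically is the restriction of a Möbius transformation. -/
theorem mobius_of_schwarzian_eq_zero (U : Set ℂ) (hU : IsOpen U) (hUc : IsConnected U)
    (f : ℂ → ℂ) (hf : AnalyticOnNhd ℂ f U)
    (hf' : ∀ z ∈ U, deriv f z ≠ 0)
    (hS : ∀ z ∈ U, schwarzian f z = 0) :
    ∃ a b c d : ℂ, a * d - b * c ≠ 0 ∧
      ∀ z ∈ U, c * z + d ≠ 0 ∧ f z = (a * z + b) / (c * z + d) :=
  mobius_of_schwarzian_eq_zero_general hU hUc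
    (fun z hz => (hf z hz).differentiableAt.hasDerivAt)
    (fun z hz => (hf z hz).deriv.differentiableAt.hasDerivAt)
    (fun z hz => (hf z hz).deriv.deriv.differentiableAt.hasDerivAt) hf' hS
end

section
/- Let U ⊆ ℂ be open, let q, u₁, u₂ : ℂ → ℂ be complex analytic on a neighborhood of each point of U, and suppose that on U both u₁ and u₂ satisfy the linear ODE u''(z) = −(q(z)/2)·u(z), and that their Wronskian is identically 1 on U: deriv u₁ z · u₂ z − u₁ z · deriv u₂ z = 1 for all z ∈ U. Then for every z ∈ U with u₂(z) ≠ 0, the quotient f = u₁/u₂ (defined pointwise) satisfies deriv f z ≠ 0 and its Schwarzian derivative equals q: Sf(z) = q(z). -/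
section

open Filter
open scoped Topology

section NontriviallyNormedField

variable {𝕜 : Type*} [NontriviallyNormedField 𝕜] {u v : 𝕜 → 𝕜} {z : 𝕜}

/-- The Wronskian of `u` and `v`. The sign is opposite to the usual `u v' - u' v`, so that
`(u / v)' = wronskian u v / v²`. -/
noncomputable def wronskian (u v : 𝕜 → 𝕜) (z : 𝕜) : 𝕜 :=
  deriv u z * v z - u z * deriv v z

theorem deriv_div_eq_wronskian_div_sq (hu : DifferentiableAt 𝕜 u z) (hv : DifferentiableAt 𝕜 v z)
    (hvz : v z ≠ 0) : deriv (fun w => u w / v w) z = wronskian u v z / v z ^ 2 :=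
  deriv_fun_div hu hv hvz

theorem hasDerivAt_wronskian (hu : DifferentiableAt 𝕜 u z) (hv : DifferentiableAt 𝕜 v z)
    (hu' : DifferentiableAt 𝕜 (deriv u) z) (hv' : DifferentiableAt 𝕜 (deriv v) z) :
    HasDerivAt (wronskian u v) (deriv (deriv u) z * v z - u z * deriv (deriv v) z) z := by
  have h := (hu'.hasDerivAt.fun_mul hv.hasDerivAt).fun_sub (hu.hasDerivAt.fun_mul hv'.hasDerivAt)
  exact h.congr_deriv (by ring)

theorem hasDerivAt_div_pow {g : 𝕜 → 𝕜} {g' v' : 𝕜} (hg : HasDerivAt g g' z)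
    (hv : HasDerivAt v v' z) (hvz : v z ≠ 0) (n : ℕ) :
    HasDerivAt (fun w => g w / v w ^ n) (g' / v z ^ n - n * g z * v' / v z ^ (n + 1)) z := by
  refine (hg.fun_div (hv.fun_pow n) (pow_ne_zero n hvz)).congr_deriv ?_
  cases n with
  | zero => simp
  | succ n =>
    rw [Nat.add_sub_cancel]
    field_simp
    ring

end NontriviallyNormedField

section RCLike

variable {𝕜 : Type*} [RCLike 𝕜] {z : 𝕜}

theorem eventually_eq_of_eventually_hasDerivAt_zero {f : 𝕜 → 𝕜}
    (hf : ∀ᶠ w in 𝓝 z, HasDerivAt f 0 w) : ∀ᶠ w in 𝓝 z, f w = f z := by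
  obtain ⟨s, hs, hs_open, hzs⟩ := eventually_nhds_iff.mp hf
  have h_open : IsOpen (s ∩ f ⁻¹' {f z}) :=
    hs_open.isOpen_inter_preimage_of_deriv_eq_zero
      (fun w hw => (hs w hw).differentiableAt.differentiableWithinAt)
      (fun w hw => (hs w hw).deriv) {f z}
  exact (h_open.eventually_mem ⟨hzs, rfl⟩).mono fun w hw => hw.2

theorem eventually_wronskian_eq {p u v : 𝕜 → 𝕜} (hu : AnalyticAt 𝕜 u z) (hv : AnalyticAt 𝕜 v z)
    (hu_ode : ∀ᶠ w in 𝓝 z, deriv (deriv u) w = p w * u w)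
    (hv_ode : ∀ᶠ w in 𝓝 z, deriv (deriv v) w = p w * v w) :
    ∀ᶠ w in 𝓝 z, wronskian u v w = wronskian u v z := by
  apply eventually_eq_of_eventually_hasDerivAt_zero
  filter_upwards [hu.eventually_analyticAt, hv.eventually_analyticAt, hu_ode, hv_ode]
    with w huw hvw hu'' hv''
  have h := hasDerivAt_wronskian huw.differentiableAt hvw.differentiableAt
    huw.deriv.differentiableAt hvw.deriv.differentiableAt
  refine h.congr_deriv ?_
  rw [hu'', hv'']
  ring

end RCLike

theorem schwarzian_of_deriv_eventuallyEq_const_div_sq {f v : ℂ → ℂ} {c z : ℂ} (hc : c ≠ 0)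
    (hv : AnalyticAt ℂ v z) (hvz : v z ≠ 0) (hf : deriv f =ᶠ[𝓝 z] fun w => c / v w ^ 2) :
    schwarzian f z = -2 * deriv (deriv v) z / v z := by
  have hf₂ : deriv (deriv f) =ᶠ[𝓝 z] fun w => -2 * c * deriv v w / v w ^ 3 := by
    filter_upwards [hf.eventuallyEq_nhds, hv.eventually_analyticAt,
      hv.continuousAt.eventually_ne hvz] with w hfw hvw hvw_ne
    rw [hfw.deriv_eq, (hasDerivAt_div_pow (hasDerivAt_const w c)
      hvw.differentiableAt.hasDerivAt hvw_ne 2).deriv]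
    push_cast
    ring
  have hf₃ : deriv (deriv (deriv f)) z =
      -2 * c * deriv (deriv v) z / v z ^ 3 + 6 * c * deriv v z ^ 2 / v z ^ 4 := by
    rw [hf₂.deriv_eq, (hasDerivAt_div_pow
      (hv.deriv.differentiableAt.hasDerivAt.const_mul (-2 * c))
      hv.differentiableAt.hasDerivAt hvz 3).deriv]
    push_cast
    ring
  rw [schwarzian, hf₃, hf₂.eq_of_nhds, hf.eq_of_nhds]
  field_simp
  ring

theorem schwarzian_of_ode_solutions_general {q u₁ u₂ : ℂ → ℂ} {z : ℂ}
    (hu₁ : AnalyticAt ℂ u₁ z) (hu₂ : AnalyticAt ℂ u₂ z)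
    (hode₁ : ∀ᶠ w in 𝓝 z, deriv (deriv u₁) w = -(q w / 2) * u₁ w)
    (hode₂ : ∀ᶠ w in 𝓝 z, deriv (deriv u₂) w = -(q w / 2) * u₂ w)
    (hW : wronskian u₁ u₂ z ≠ 0) (hz : u₂ z ≠ 0) :
    deriv (fun w => u₁ w / u₂ w) z ≠ 0 ∧ schwarzian (fun w => u₁ w / u₂ w) z = q z := by
  have hderiv : deriv (fun w => u₁ w / u₂ w) =ᶠ[𝓝 z] fun w => wronskian u₁ u₂ z / u₂ w ^ 2 := by
    filter_upwards [hu₁.eventually_analyticAt, hu₂.eventually_analyticAt,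
      hu₂.continuousAt.eventually_ne hz, eventually_wronskian_eq hu₁ hu₂ hode₁ hode₂]
      with w hu₁w hu₂w hw hWw
    rw [deriv_div_eq_wronskian_div_sq hu₁w.differentiableAt hu₂w.differentiableAt hw, hWw]
  constructor
  · rw [hderiv.eq_of_nhds]
    exact div_ne_zero hW (pow_ne_zero 2 hz)
  · rw [schwarzian_of_deriv_eventuallyEq_const_div_sq hW hu₂ hz hderiv, hode₂.self_of_nhds]
    field_simp

end

/-- If `u₁`, `u₂` solve `u'' = −(q/2)·u` with Wronskian identically `1`, then the
quotient `f = u₁/u₂` satisfies `Sf = q` wherever `u₂ ≠ 0`. -/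
theorem schwarzian_of_ode_solutions (U : Set ℂ) (hU : IsOpen U)
    (q u₁ u₂ : ℂ → ℂ)
    (hq : AnalyticOnNhd ℂ q U) (hu₁ : AnalyticOnNhd ℂ u₁ U) (hu₂ : AnalyticOnNhd ℂ u₂ U)
    (hode₁ : ∀ z ∈ U, deriv (deriv u₁) z = -(q z / 2) * u₁ z)
    (hode₂ : ∀ z ∈ U, deriv (deriv u₂) z = -(q z / 2) * u₂ z)
    (hW : ∀ z ∈ U, deriv u₁ z * u₂ z - u₁ z * deriv u₂ z = 1) :
    ∀ z ∈ U, u₂ z ≠ 0 →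
      deriv (fun w => u₁ w / u₂ w) z ≠ 0 ∧
      schwarzian (fun w => u₁ w / u₂ w) z = q z := by
  intro z hz hz₂
  have hzU := hU.eventually_mem hz
  exact schwarzian_of_ode_solutions_general (hu₁ z hz) (hu₂ z hz) (hzU.mono hode₁)
    (hzU.mono hode₂) ((hW z hz).trans_ne one_ne_zero) hz₂
end

section
/- Let n : ℕ, let U ⊆ (Fin n → ℂ) be an open preconnected set, and let f : (Fin n → ℂ) → ℂ be complex analytic on a neighborhood of each point of U. Suppose there exists a point z₀ ∈ U all of whose coordinates are real (i.e. (z₀ k).im = 0 for every k), and that f vanishes at every point of U with all real coordinates: for every z ∈ U with (z k).im = 0 for all k, f(z) = 0. Then f vanishes identically on U. (A holomorphic function vanishing on the maximal totally real slice ℝⁿ ⊆ ℂⁿ vanishes everywhere.) -/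
/-!
If `x` and `y` are real vectors and `c` is the real centre, then `w ↦ f (c + x + w y)` is a
holomorphic function of one variable which vanishes at the real points near `0`, so it vanishes at
`w = i`. Every vector has the form `x + i y`, so `f` vanishes near `c`, and the identity theorem
propagates this to the whole domain.

The argument uses nothing about `ℝⁿ ⊆ ℂⁿ` except that its complex span is everything. To avoid any
control on the size of `x` and `y` in terms of `x + i y`, the vector is first scaled by a small real
`t`; the one-variable argument in `t` then removes the scaling.
-/

open Complex Filter Topology UniformSpace

section OneVariable

variable {F : Type*} [NormedAddCommGroup F] [NormedSpace ℂ F]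

lemma eqOn_zero_of_frequently_ofReal_eq_zero {g : ℂ → F} {s : Set ℂ} {x : ℝ}
    (hg : AnalyticOnNhd ℂ g s) (hs : IsPreconnected s) (hx : (x : ℂ) ∈ s)
    (hzero : ∃ᶠ t : ℝ in 𝓝[≠] x, g t = 0) :
    Set.EqOn g 0 s := by
  have hlim : Tendsto ((↑) : ℝ → ℂ) (𝓝[≠] x) (𝓝[≠] (x : ℂ)) :=
    continuous_ofReal.continuousWithinAt.tendsto_nhdsWithin fun _ ht => ofReal_injective.ne ht
  exact hg.eqOn_zero_of_preconnected_of_frequently_eq_zero hs hx (hlim.frequently hzero)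

end OneVariable

section ComplexSpan

variable {E : Type*} [AddCommGroup E] [Module ℂ E] {M : Submodule ℝ E}

lemma mem_span_complex_iff {z : E} :
    z ∈ Submodule.span ℂ (M : Set E) ↔ ∃ x ∈ M, ∃ y ∈ M, x + I • y = z := by
  constructor
  · intro hz
    induction hz using Submodule.span_induction with
    | mem x hx => exact ⟨x, hx, 0, M.zero_mem, by simp⟩
    | zero => exact ⟨0, M.zero_mem, 0, M.zero_mem, by simp⟩
    | add _ _ _ _ h₁ h₂ =>
      obtain ⟨x₁, hx₁, y₁, hy₁, rfl⟩ := h₁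
      obtain ⟨x₂, hx₂, y₂, hy₂, rfl⟩ := h₂
      exact ⟨x₁ + x₂, M.add_mem hx₁ hx₂, y₁ + y₂, M.add_mem hy₁ hy₂, by module⟩
    | smul a _ _ h =>
      obtain ⟨x, hx, y, hy, rfl⟩ := h
      refine ⟨a.re • x - a.im • y, M.sub_mem (M.smul_mem _ hx) (M.smul_mem _ hy),
        a.im • x + a.re • y, M.add_mem (M.smul_mem _ hx) (M.smul_mem _ hy), ?_⟩
      match_scalars <;> simp [Complex.ext_iff]
  · rintro ⟨x, hx, y, hy, rfl⟩
    exact add_mem (Submodule.subset_span hx) (Submodule.smul_mem _ I (Submodule.subset_span hy))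

end ComplexSpan

section GeneratingRealSubspace

variable {E F : Type*} [NormedAddCommGroup E] [NormedSpace ℂ E]
  [NormedAddCommGroup F] [NormedSpace ℂ F] {f : E → F} {c : E} {s : Set E} {M : Submodule ℝ E}

lemma eq_zero_of_eventually_eq_zero_on_real_line {a v : E} {w : ℂ}
    (hs : Convex ℝ s) (hf : AnalyticOnNhd ℂ f s) (ha : a ∈ s) (hw : a + w • v ∈ s)
    (hzero : ∀ᶠ t : ℝ in 𝓝 0, f (a + t • v) = 0) :
    f (a + w • v) = 0 := by
  have hconv : Convex ℝ ((fun u : ℂ => a + u • v) ⁻¹' s) :=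
    (hs.translate_preimage_right a).linear_preimage
      ((LinearMap.toSpanSingleton ℂ E v).restrictScalars ℝ)
  have hline : AnalyticOnNhd ℂ (fun u : ℂ => a + u • v) ((fun u : ℂ => a + u • v) ⁻¹' s) :=
    fun u _ => by fun_prop
  exact eqOn_zero_of_frequently_ofReal_eq_zero (x := 0)
    (hf.comp hline (Set.mapsTo_preimage _ s)) hconv.isPreconnected
    (by simpa using ha) (by simpa using (hzero.filter_mono nhdsWithin_le_nhds).frequently) hw

lemma eventually_smul_eq_zero_of_eventually_eq_zero_on_submodule {x y : E}
    (hs : Convex ℝ s) (hsc : s ∈ 𝓝 c) (hf : AnalyticOnNhd ℂ f s)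
    (hx : x ∈ M) (hy : y ∈ M) (hzero : ∀ᶠ z in 𝓝 c, z - c ∈ M → f z = 0) :
    ∀ᶠ t : ℝ in 𝓝 0, f (c + t • (x + I • y)) = 0 := by
  have hlim (v : E) : Tendsto (fun t : ℝ => c + t • v) (𝓝 0) (𝓝 c) :=
    Continuous.tendsto' (by fun_prop) _ _ (by simp)
  have hmem (v : E) : ∀ᶠ t : ℝ in 𝓝 0, c + t • v ∈ s := hlim v hsc
  filter_upwards [hmem x, hmem (x + I • y), (hlim x).eventually hzero.eventually_nhds]
    with t htx ht htzero
  have hsplit : c + t • (x + I • y) = (c + t • x) + I • (t • y) := by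
    rw [smul_add, smul_comm t I y, add_assoc]
  have hreal : ∀ᶠ u : ℝ in 𝓝 0, f ((c + t • x) + u • (t • y)) = 0 := by
    have hlim' : Tendsto (fun u : ℝ => (c + t • x) + u • (t • y)) (𝓝 0) (𝓝 (c + t • x)) :=
      Continuous.tendsto' (by fun_prop) _ _ (by simp)
    filter_upwards [hlim'.eventually htzero] with u hu
    refine hu ?_
    rw [add_assoc, add_sub_cancel_left]
    exact M.add_mem (M.smul_mem _ hx) (M.smul_mem _ (M.smul_mem _ hy))
  rw [hsplit] at ht ⊢
  exact eq_zero_of_eventually_eq_zero_on_real_line hs hf htx ht hreal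

lemma eqOn_zero_of_convex_of_eventually_eq_zero_on_submodule (hM : Submodule.span ℂ (M : Set E) = ⊤)
    (hs : Convex ℝ s) (hsc : s ∈ 𝓝 c) (hf : AnalyticOnNhd ℂ f s)
    (hzero : ∀ᶠ z in 𝓝 c, z - c ∈ M → f z = 0) :
    Set.EqOn f 0 s := by
  intro z hz
  obtain ⟨x, hx, y, hy, hxy⟩ := mem_span_complex_iff.mp (hM ▸ Submodule.mem_top : z - c ∈ _)
  have hend : c + (1 : ℂ) • (x + I • y) = z := by rw [hxy, one_smul, add_sub_cancel]
  rw [← hend] at hz ⊢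
  exact eq_zero_of_eventually_eq_zero_on_real_line hs hf (mem_of_mem_nhds hsc) hz
    (eventually_smul_eq_zero_of_eventually_eq_zero_on_submodule hs hsc hf hx hy hzero)

lemma eventuallyEq_zero_of_eventually_eq_zero_on_submodule (hM : Submodule.span ℂ (M : Set E) = ⊤)
    (hf : AnalyticAt ℂ f c) (hzero : ∀ᶠ z in 𝓝 c, z - c ∈ M → f z = 0) :
    f =ᶠ[𝓝 c] 0 := by
  -- If `F` is incomplete, analyticity at `c` need not extend to a neighbourhood of `c`.
  let g : E → Completion F := fun z => f z
  have hg : AnalyticAt ℂ g c :=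
    ((Completion.toComplL : F →L[ℂ] Completion F).analyticAt (f c)).comp hf
  have hgzero : ∀ᶠ z in 𝓝 c, z - c ∈ M → g z = 0 :=
    hzero.mono fun z hz hzc => Completion.coe_eq_zero_iff.mpr (hz hzc)
  obtain ⟨r, hr, hball⟩ := hg.exists_ball_analyticOnNhd
  filter_upwards [Metric.ball_mem_nhds c hr] with z hz
  exact Completion.coe_eq_zero_iff.mp <|
    eqOn_zero_of_convex_of_eventually_eq_zero_on_submodule hM (convex_ball c r)
      (Metric.ball_mem_nhds c hr) hball hgzero hz

theorem eq_zero_of_eq_zero_on_real_slice_general {U : Set E}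
    (hM : Submodule.span ℂ (M : Set E) = ⊤) (hU : IsPreconnected U) (hf : AnalyticOnNhd ℂ f U)
    (hc : c ∈ U) (hzero : ∀ᶠ z in 𝓝 c, z - c ∈ M → f z = 0) :
    Set.EqOn f 0 U :=
  hf.eqOn_zero_of_preconnected_of_eventuallyEq_zero hU hc
    (eventuallyEq_zero_of_eventually_eq_zero_on_submodule hM (hf c hc) hzero)

end GeneratingRealSubspace

section RealSlice

variable (ι : Type*)

/-- The maximal totally real subspace `ℝ^ι` of `ℂ^ι`, cut out by the vanishing of all imaginary
parts. -/
noncomputable def realSlice : Submodule ℝ (ι → ℂ) :=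
  Submodule.pi Set.univ fun _ => LinearMap.ker imLm

variable {ι}

lemma mem_realSlice {z : ι → ℂ} : z ∈ realSlice ι ↔ ∀ k, (z k).im = 0 := by
  simp [realSlice]

lemma span_complex_realSlice : Submodule.span ℂ (realSlice ι : Set (ι → ℂ)) = ⊤ := by
  refine eq_top_iff.mpr fun z _ => mem_span_complex_iff.mpr
    ⟨fun k => (z k).re, mem_realSlice.mpr fun k => ofReal_im _,
      fun k => (z k).im, mem_realSlice.mpr fun k => ofReal_im _, ?_⟩
  ext1 k
  simp [mul_comm I, re_add_im]

end RealSlice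

/-- A holomorphic function on an open preconnected subset of `ℂⁿ` that vanishes on the
maximal totally real slice `ℝⁿ ⊆ ℂⁿ` (assumed to meet the set) vanishes identically. -/
theorem eq_zero_of_eq_zero_on_real_slice (n : ℕ) (U : Set (Fin n → ℂ))
    (hU : IsOpen U) (hUc : IsPreconnected U)
    (f : (Fin n → ℂ) → ℂ) (hf : AnalyticOnNhd ℂ f U)
    (hreal : ∃ z₀ ∈ U, ∀ k, (z₀ k).im = 0)
    (hvanish : ∀ z ∈ U, (∀ k, (z k).im = 0) → f z = 0) :
    ∀ z ∈ U, f z = 0 := by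
  obtain ⟨c, hcU, hc⟩ := hreal
  refine eq_zero_of_eq_zero_on_real_slice_general span_complex_realSlice hUc hf hcU ?_
  filter_upwards [hU.mem_nhds hcU] with z hz hzc
  exact hvanish z hz fun k => by simpa [hc k] using mem_realSlice.mp hzc k
end
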